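/- Let k ≥ 1, δ ≥ 2, n ≥ (δ² + kδ + 7δ + 6k + 9)(δ² + kδ + 1), and let G ∈ 𝓑₂(n,k,δ) be a graph attaining the maximum Q-index among all graphs in 𝓑₂(n,k,δ), and, subject to that, such that the induced subgraph G[Y] has the largest number of edges. Let h be a positive eigenvector of Q(G) for q(G), normalized so that its maximum entry equals 1, and suppose q(G) > n − 1. Then max_{i ∈ V(G)} h_i − min_{j ∈ Y ∪ Z} h_j < ((δ+k)(δ+4) + 4)/(2(q(G) − n + 1)). -/

import Mathlib

open Finset Matrix

/-- The signless Laplacian matrix `Q(G) = D(G) + A(G)` of a graph. -/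
noncomputable def signlessLaplacian {V : Type*} [Fintype V] [DecidableEq V]
    (G : SimpleGraph V) [DecidableRel G.Adj] : Matrix V V ℝ :=
  Matrix.diagonal (fun v => (G.degree v : ℝ)) + G.adjMatrix ℝ

/-- The Q-index (largest eigenvalue of the signless Laplacian). -/
noncomputable def qIndex {V : Type*} [Fintype V] [DecidableEq V]
    (G : SimpleGraph V) [DecidableRel G.Adj] : ℝ :=
  sSup {μ : ℝ | ∃ x : V → ℝ, x ≠ 0 ∧ signlessLaplacian G *ᵥ x = μ • x}

/-- The adjacency spectral radius (largest eigenvalue of the adjacency matrix). -/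
noncomputable def adjSpecRad {V : Type*} [Fintype V] [DecidableEq V]
    (G : SimpleGraph V) [DecidableRel G.Adj] : ℝ :=
  sSup {μ : ℝ | ∃ x : V → ℝ, x ≠ 0 ∧ G.adjMatrix ℝ *ᵥ x = μ • x}

/-- A graph is `k`-path-coverable if its vertex set can be covered by at most `k`
vertex-disjoint paths. -/
def PathCoverable {V : Type*} (G : SimpleGraph V) (k : ℕ) : Prop :=
  ∃ (m : ℕ) (P : Fin m → Σ (u : V) (v : V), G.Walk u v),
    m ≤ k ∧
    (∀ i, (P i).2.2.IsPath) ∧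
    (∀ v : V, ∃ i, v ∈ (P i).2.2.support) ∧
    (∀ i j, i ≠ j → ∀ v, v ∈ (P i).2.2.support → v ∉ (P j).2.2.support)

/-- A graph is traceable if it has a Hamilton path. -/
def Traceable {V : Type*} (G : SimpleGraph V) : Prop :=
  ∃ (u v : V) (p : G.Walk u v), p.IsPath ∧ ∀ w, w ∈ p.support

/-- `B(n,k,δ) = K_δ ∨ (K_{n-2δ-k} ∪ complement K_{δ+k})`: the first `δ` vertices form the
dominating clique `Y`, the next `n-2δ-k` vertices form the clique `Z`, and the
last `δ+k` vertices form the independent set `X`. -/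
def Bgraph (n k δ : ℕ) : SimpleGraph (Fin n) where
  Adj i j := i ≠ j ∧ ((i : ℕ) < δ ∨ (j : ℕ) < δ ∨
      ((i : ℕ) < n - (δ + k) ∧ (j : ℕ) < n - (δ + k)))
  symm := by
    constructor
    rintro i j ⟨hne, h⟩
    exact ⟨hne.symm, by tauto⟩
  loopless := by
    constructor
    rintro i ⟨h, -⟩
    exact h rfl

instance (n k δ : ℕ) : DecidableRel (Bgraph n k δ).Adj := fun i j =>
  inferInstanceAs (Decidable (i ≠ j ∧ ((i : ℕ) < δ ∨ (j : ℕ) < δ ∨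
      ((i : ℕ) < n - (δ + k) ∧ (j : ℕ) < n - (δ + k)))))

instance {n : ℕ} (G : SimpleGraph (Fin n)) [DecidableRel G.Adj]
    (E' : Finset (Sym2 (Fin n))) : DecidableRel (G.deleteEdges ↑E').Adj := fun a b =>
  decidable_of_iff (G.Adj a b ∧ s(a, b) ∉ E') (by simp)

/-- The edge set `E₁` of `B(n,k,δ)`: edges with both endpoints in `Y ∪ Z`. -/
def IsE1Edge (n k δ : ℕ) (e : Sym2 (Fin n)) : Prop :=
  e ∈ (Bgraph n k δ).edgeSet ∧ ∀ v ∈ e, (v : ℕ) < n - (δ + k)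

/-- The family `𝓑₁(n,k,δ)`, up to isomorphism. -/
def InB1 (n k δ : ℕ) (G : SimpleGraph (Fin n)) : Prop :=
  ∃ E' : Finset (Sym2 (Fin n)),
    (∀ e ∈ E', IsE1Edge n k δ e) ∧ E'.card ≤ δ * (δ + k) / 4 ∧
    Nonempty (G ≃g (Bgraph n k δ).deleteEdges ↑E')

/-- The family `𝓑₂(n,k,δ)`, up to isomorphism. -/
def InB2 (n k δ : ℕ) (G : SimpleGraph (Fin n)) : Prop :=
  ∃ E' : Finset (Sym2 (Fin n)),
    (∀ e ∈ E', IsE1Edge n k δ e) ∧ E'.card = δ * (δ + k) / 4 + 1 ∧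
    Nonempty (G ≃g (Bgraph n k δ).deleteEdges ↑E')
/-- The number of edges of the subgraph of `G` induced by `Y` (the first `δ` vertices). -/
def inducedYEdges (n δ : ℕ) (G : SimpleGraph (Fin n)) [DecidableRel G.Adj] : ℕ :=
  (G.edgeFinset.filter (fun e => ∀ v : Fin n, v ∈ e → (v : ℕ) < δ)).card

/-!
An eigenvalue equation for `Q(G)` is best read in the complement. As `Q(G) + Q(Gᶜ) = (n - 2) I + J`,
an eigenvector `h` of `Q(G)` for `μ` satisfies `(μ - n + 2) h i = ∑ u, h u - (Q(Gᶜ) h) i`, and the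
sum cancels when two vertices are compared:
`(μ - n + 2) (h i - h j) = (Q(Gᶜ) h) j - (Q(Gᶜ) h) i`. For `0 ≤ h ≤ 1` the right-hand side is at
most twice the number of non-neighbours of `j`, and a vertex of `Y ∪ Z` has few of them: the
`δ + k` vertices of `X`, and at most one for each deleted edge.
-/

section SignlessLaplacian

variable {V : Type*} [Fintype V] [DecidableEq V] (G : SimpleGraph V) [DecidableRel G.Adj]

lemma signlessLaplacian_mulVec_apply (x : V → ℝ) (v : V) :
    (signlessLaplacian G *ᵥ x) v = ∑ u ∈ G.neighborFinset v, (x v + x u) := by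
  simp [signlessLaplacian, add_mulVec, mulVec_diagonal, SimpleGraph.adjMatrix_mulVec_apply,
    sum_add_distrib]

lemma signlessLaplacian_mulVec_nonneg {x : V → ℝ} (hx : 0 ≤ x) :
    0 ≤ signlessLaplacian G *ᵥ x := fun v => by
  rw [signlessLaplacian_mulVec_apply]
  exact sum_nonneg fun u _ => add_nonneg (hx v) (hx u)

lemma signlessLaplacian_mulVec_le {x : V → ℝ} {M : ℝ} (hx : ∀ v, x v ≤ M) (v : V) :
    (signlessLaplacian G *ᵥ x) v ≤ G.degree v * (2 * M) := by
  rw [signlessLaplacian_mulVec_apply, ← nsmul_eq_mul, two_mul]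
  exact sum_le_card_nsmul _ _ _ fun u _ => add_le_add (hx v) (hx u)

lemma signlessLaplacian_add_signlessLaplacian_compl :
    signlessLaplacian G + signlessLaplacian Gᶜ =
      ((Fintype.card V : ℝ) - 2) • (1 : Matrix V V ℝ) + of 1 := by
  have degree_add_compl (v : V) : (G.degree v : ℝ) + Gᶜ.degree v = Fintype.card V - 1 := by
    have := G.degree_compl v
    have := G.degree_lt_card_verts v
    rw [eq_sub_iff_add_eq]
    norm_cast
    lia
  rw [← G.one_add_adjMatrix_add_compl_adjMatrix_eq_of_one ℝ,
    SimpleGraph.compl_adjMatrix_eq_adjMatrix_compl, signlessLaplacian, signlessLaplacian,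
    add_add_add_comm, diagonal_add]
  simp only [degree_add_compl, ← smul_one_eq_diagonal]
  module

variable {G} {x : V → ℝ} {μ : ℝ}

lemma mul_eigenvector_apply_eq_sum_sub (hx : signlessLaplacian G *ᵥ x = μ • x) (v : V) :
    (μ - Fintype.card V + 2) * x v = ∑ u, x u - (signlessLaplacian Gᶜ *ᵥ x) v := by
  have allOnes_mulVec : (of 1 *ᵥ x) v = ∑ u, x u := by simp [mulVec, dotProduct]
  have key := congrFun (congrArg (· *ᵥ x) (signlessLaplacian_add_signlessLaplacian_compl G)) v
  simp only [add_mulVec, smul_mulVec, one_mulVec, hx, Pi.add_apply, Pi.smul_apply, smul_eq_mul,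
    allOnes_mulVec] at key
  linarith

lemma mul_eigenvector_sub_le (hx : signlessLaplacian G *ᵥ x = μ • x) (hx0 : 0 ≤ x) {M : ℝ}
    (hxM : ∀ v, x v ≤ M) (i j : V) :
    (μ - Fintype.card V + 2) * (x i - x j) ≤ Gᶜ.degree j * (2 * M) :=
  calc (μ - Fintype.card V + 2) * (x i - x j)
      = (signlessLaplacian Gᶜ *ᵥ x) j - (signlessLaplacian Gᶜ *ᵥ x) i := by
        rw [mul_sub, mul_eigenvector_apply_eq_sum_sub hx, mul_eigenvector_apply_eq_sum_sub hx]
        ring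
    _ ≤ (signlessLaplacian Gᶜ *ᵥ x) j := sub_le_self _ (signlessLaplacian_mulVec_nonneg Gᶜ hx0 i)
    _ ≤ Gᶜ.degree j * (2 * M) := signlessLaplacian_mulVec_le Gᶜ hxM j

end SignlessLaplacian

section ComplementDegree

lemma degree_compl_le_of_deleteEdges_le {V : Type*} [Fintype V] [DecidableEq V]
    {H G : SimpleGraph V} [DecidableRel H.Adj] [DecidableRel G.Adj] {E : Finset (Sym2 V)}
    (hle : H.deleteEdges ↑E ≤ G) (v : V) : Gᶜ.degree v ≤ Hᶜ.degree v + #E := by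
  have hsub : Gᶜ.neighborFinset v ⊆ Hᶜ.neighborFinset v ∪ univ.filter (s(v, ·) ∈ E) := by
    intro u hu
    simp only [mem_union, mem_filter_univ, SimpleGraph.mem_neighborFinset,
      SimpleGraph.compl_adj] at hu ⊢
    by_contra! hc
    exact hu.2 (hle (SimpleGraph.deleteEdges_adj.2 ⟨hc.1 hu.1, hc.2⟩))
  have hstar : #(univ.filter (s(v, ·) ∈ E)) ≤ #E :=
    card_le_card_of_injOn (s(v, ·)) (fun u hu => by simpa using hu)
      fun _ _ _ _ => Sym2.congr_right.1
  calc Gᶜ.degree v ≤ #(Hᶜ.neighborFinset v ∪ univ.filter (s(v, ·) ∈ E)) := card_le_card hsub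
    _ ≤ Hᶜ.degree v + #E := (card_union_le _ _).trans (Nat.add_le_add_left hstar _)

variable {n k δ : ℕ}

lemma degree_compl_Bgraph_le {j : Fin n} (hj : (j : ℕ) < n - (δ + k)) :
    (Bgraph n k δ)ᶜ.degree j ≤ δ + k := by
  have hsub : (Bgraph n k δ)ᶜ.neighborFinset j ⊆ (univ.filter (·.val < n - (δ + k)))ᶜ := by
    intro u hu
    rw [SimpleGraph.mem_neighborFinset, SimpleGraph.compl_adj] at hu
    rw [mem_compl, mem_filter_univ]
    exact fun hu' => hu.2 ⟨hu.1, .inr (.inr ⟨hj, hu'⟩)⟩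
  have hcard := card_le_card hsub
  rw [card_compl, Fin.card_filter_val_lt, Fintype.card_fin,
    SimpleGraph.card_neighborFinset_eq_degree] at hcard
  lia

end ComplementDegree

theorem eigenvector_gap_general {k δ n : ℕ} {E' : Finset (Sym2 (Fin n))}
    (hcard : #E' ≤ δ * (δ + k) / 4 + 1) {G : SimpleGraph (Fin n)} [DecidableRel G.Adj]
    (hG : (Bgraph n k δ).deleteEdges ↑E' ≤ G) {h : Fin n → ℝ} (hnonneg : 0 ≤ h)
    (hle : ∀ v, h v ≤ 1) {μ : ℝ} (heig : signlessLaplacian G *ᵥ h = μ • h)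
    (hμ : (n : ℝ) - 1 < μ) (i : Fin n) {j : Fin n} (hj : (j : ℕ) < n - (δ + k)) :
    h i - h j < (((δ : ℝ) + k) * ((δ : ℝ) + 4) + 4) / (2 * (μ - n + 1)) := by
  have hdeg : 4 * (Gᶜ.degree j : ℝ) ≤ (δ + k) * (δ + 4) + 4 := by
    have := degree_compl_le_of_deleteEdges_le hG j
    have := degree_compl_Bgraph_le hj
    have : 4 * Gᶜ.degree j ≤ (δ + k) * (δ + 4) + 4 := by lia
    exact_mod_cast this
  have hgap := mul_eigenvector_sub_le heig hnonneg hle i j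
  rw [Fintype.card_fin] at hgap
  have hpos : 0 < μ - n + 1 := by linarith
  calc h i - h j ≤ (((δ : ℝ) + k) * ((δ : ℝ) + 4) + 4) / (2 * (μ - n + 2)) := by
        rw [le_div_iff₀ (by linarith)]
        linarith
    _ < (((δ : ℝ) + k) * ((δ : ℝ) + 4) + 4) / (2 * (μ - n + 1)) := by
        gcongr
        norm_num

/-- **Lemma 3.6**: with `G` extremal in `𝓑₂(n,k,δ)` as before and `h` a positive
`q(G)`-eigenvector with maximum entry `1`, the gap between the largest entry of `h` and the
smallest entry of `h` over `Y ∪ Z` is less than `((δ+k)(δ+4)+4)/(2(q(G)-n+1))`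
(stated as: `h i - h j` is below this bound for every vertex `i` and every `j ∈ Y ∪ Z`). -/
theorem eigenvector_gap (k δ n : ℕ) (hk : 1 ≤ k) (hδ : 2 ≤ δ)
    (hn : (δ ^ 2 + k * δ + 7 * δ + 6 * k + 9) * (δ ^ 2 + k * δ + 1) ≤ n)
    (E' : Finset (Sym2 (Fin n))) (hE : ∀ e ∈ E', IsE1Edge n k δ e)
    (hcard : E'.card = δ * (δ + k) / 4 + 1)
    (G : SimpleGraph (Fin n)) [DecidableRel G.Adj]
    (hG : G = (Bgraph n k δ).deleteEdges ↑E')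
    (hmax : ∀ E'' : Finset (Sym2 (Fin n)), (∀ e ∈ E'', IsE1Edge n k δ e) →
        E''.card = δ * (δ + k) / 4 + 1 →
        qIndex ((Bgraph n k δ).deleteEdges ↑E'') ≤ qIndex G)
    (hmaxY : ∀ E'' : Finset (Sym2 (Fin n)), (∀ e ∈ E'', IsE1Edge n k δ e) →
        E''.card = δ * (δ + k) / 4 + 1 →
        qIndex ((Bgraph n k δ).deleteEdges ↑E'') = qIndex G →
        inducedYEdges n δ ((Bgraph n k δ).deleteEdges ↑E'') ≤ inducedYEdges n δ G)
    (h : Fin n → ℝ) (hpos : ∀ v, 0 < h v)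
    (heig : signlessLaplacian G *ᵥ h = qIndex G • h)
    (hnorm : (∀ v, h v ≤ 1) ∧ ∃ v, h v = 1)
    (hq : (n : ℝ) - 1 < qIndex G) :
    ∀ i j : Fin n, (j : ℕ) < n - (δ + k) →
      h i - h j < (((δ : ℝ) + k) * ((δ : ℝ) + 4) + 4) / (2 * (qIndex G - n + 1)) :=
  fun i _ hj => eigenvector_gap_general hcard.le hG.ge (fun v => (hpos v).le) hnorm.1 heig hq i hj
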